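/- For all integers k ≥ 1 and p ≥ 1, one has (2k)^{−1/2} · e^{iπ/4} · Σ_{q=0}^{2k−1} exp(−2πi·p·q²/(4k)) = p^{−1/2} · Σ_{n=0}^{p−1} exp(2πi·k·n²/p). In other words, the U(1) Reshetikhin–Turaev invariant of the lens space L_p equals I_k(L_p) = (1/√p) Σ_{n=0}^{p−1} e^{2πik n²/p}. -/

import Mathlib

open Complex Finset

/-!
The identity is the Landsberg–Schaar reciprocity law for quadratic Gauss sums. Splitting the theta
series by residue classes mod `N` and applying the functional equation to each class shows that,
as `τ` tends to the cusp `0`, `√(-iτ) θ(c / N + τ)` tends to the normalised Gauss sum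
`N⁻¹ Σ_{r < N} exp (πi c r² / N)`. The functional equation relates `θ` near the cusp `a / b` to `θ`
near the cusp `-b / a`; comparing the two limits gives the law.
-/

open Filter Topology

/-- The quadratic Gauss sum `Σ_{r < N} exp (πi c r² / N)`. With this half-integral normalisation the
summand depends only on `r` modulo `N` when `c * N` is even. -/
noncomputable def quadGaussSum (c : ℤ) (N : ℕ) : ℂ :=
  ∑ r ∈ range N, cexp (Real.pi * I * c * (r : ℂ) ^ 2 / N)

section ThetaSeries

theorem tendsto_jacobiTheta₂_comap_im_atTop (z : ℂ) :
    Tendsto (jacobiTheta₂ z) (comap im atTop) (𝓝 1) := by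
  have tsum_limit : ∑' n : ℤ, (if n = 0 then (1 : ℂ) else 0) = 1 := tsum_ite_eq 0 _
  rw [← tsum_limit]
  refine tendsto_tsum_of_dominated_convergence
    (bound := fun n : ℤ ↦ Real.exp (-Real.pi * (1 * n ^ 2 - 2 * |z.im| * |n|))) ?_ ?_ ?_
  · simpa using summable_pow_mul_jacobiTheta₂_term_bound |z.im| one_pos 0
  · intro n
    split_ifs with hn
    · simpa [hn, jacobiTheta₂_term] using tendsto_const_nhds
    · have coeff_neg : -Real.pi * (n : ℝ) ^ 2 < 0 :=
        mul_neg_of_neg_of_pos (neg_neg_of_pos Real.pi_pos) (by positivity)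
      rw [tendsto_zero_iff_norm_tendsto_zero]
      simp only [norm_jacobiTheta₂_term, sub_eq_add_neg]
      exact Real.tendsto_exp_atBot.comp
        (tendsto_atBot_add_const_right _ _ (tendsto_comap.const_mul_atTop_of_neg coeff_neg))
  · filter_upwards [tendsto_comap.eventually_ge_atTop 1] with τ hτ n
    exact norm_jacobiTheta₂_term_le one_pos le_rfl hτ n

theorem tsum_int_eq_sum_range_tsum {E : Type*} [AddCommGroup E] [UniformSpace E]
    [IsUniformAddGroup E] [CompleteSpace E] [T0Space E] (N : ℕ) [NeZero N] {f : ℤ → E}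
    (hf : Summable f) :
    ∑' n, f n = ∑ r ∈ range N, ∑' m : ℤ, f (m * N + r) := by
  let e : Fin N × ℤ ≃ ℤ := (Equiv.prodComm _ _).trans (Int.divModEquiv N).symm
  rw [← e.tsum_eq, Summable.tsum_prod (f := fun x ↦ f (e x)) (e.summable_iff.mpr hf), tsum_fintype,
    ← Fin.sum_univ_eq_sum_range (fun r ↦ ∑' m : ℤ, f (m * N + r))]
  rfl

theorem jacobiTheta₂_term_mul_add (N : ℕ) [NeZero N] {c : ℤ} (hc : Even (c * N)) (m r : ℤ)
    (z τ : ℂ) :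
    jacobiTheta₂_term (m * N + r) z (c / N + τ) =
      cexp (Real.pi * I * c * (r : ℂ) ^ 2 / N) * jacobiTheta₂_term r z τ *
        jacobiTheta₂_term m (N * (z + r * τ)) (N ^ 2 * τ) := by
  have hN : (N : ℂ) ≠ 0 := NeZero.ne _
  obtain ⟨e, he⟩ := hc
  have he' : (c : ℂ) * N = e + e := mod_cast he
  simp only [jacobiTheta₂_term]
  rw [← Complex.exp_add, ← Complex.exp_add, Complex.exp_eq_exp_iff_exists_int]
  refine ⟨e * m ^ 2 + c * m * r, ?_⟩
  push_cast
  field_simp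
  linear_combination (m : ℂ) ^ 2 * N * he'

theorem jacobiTheta₂_intCast_div_add (N : ℕ) [NeZero N] {c : ℤ} (hc : Even (c * N)) (z : ℂ)
    {τ : ℂ} (hτ : 0 < τ.im) :
    jacobiTheta₂ z (c / N + τ) =
      ∑ r ∈ range N, cexp (Real.pi * I * c * (r : ℂ) ^ 2 / N) * jacobiTheta₂_term r z τ *
        jacobiTheta₂ (N * (z + r * τ)) (N ^ 2 * τ) := by
  have him : 0 < ((c : ℂ) / N + τ).im := by
    rwa [← ofReal_intCast, ← ofReal_natCast, ← ofReal_div, add_im, ofReal_im, zero_add]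
  rw [jacobiTheta₂, tsum_int_eq_sum_range_tsum N ((summable_jacobiTheta₂_term_iff _ _).mpr him)]
  refine sum_congr rfl fun r _ ↦ ?_
  simp only [jacobiTheta₂_term_mul_add N hc, tsum_mul_left, jacobiTheta₂, Int.cast_natCast]

theorem exp_mul_jacobiTheta₂_mul_self (u : ℂ) {τ : ℂ} (hτ : τ ≠ 0) :
    cexp (Real.pi * I * u ^ 2 * τ) * jacobiTheta₂ (u * τ) τ =
      ((-I * τ) ^ (1 / 2 : ℂ))⁻¹ * jacobiTheta₂ u (-1 / τ) := by
  have exp_cancel :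
      cexp (Real.pi * I * u ^ 2 * τ) * cexp (-Real.pi * I * (u * τ) ^ 2 / τ) = 1 := by
    rw [← Complex.exp_add, Complex.exp_eq_one_iff]
    exact ⟨0, by field_simp; simp⟩
  rw [jacobiTheta₂_functional_equation, mul_div_cancel_right₀ _ hτ, one_div]
  linear_combination (((-I * τ) ^ (1 / 2 : ℂ))⁻¹ * jacobiTheta₂ u (-1 / τ)) * exp_cancel

end ThetaSeries

section SquareRoots

theorem ofReal_mul_cpow {r : ℝ} (hr : 0 ≤ r) (z s : ℂ) :
    ((r : ℂ) * z) ^ s = (r : ℂ) ^ s * z ^ s := by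
  rcases eq_or_ne s 0 with rfl | hs
  · simp
  rcases hr.eq_or_lt with rfl | hr_pos
  · simp [hs]
  rcases eq_or_ne z 0 with rfl | hz
  · simp [hs]
  have hr' : (r : ℂ) ≠ 0 := ofReal_ne_zero.mpr hr_pos.ne'
  rw [cpow_def_of_ne_zero (mul_ne_zero hr' hz), log_ofReal_mul hr_pos hz, ofReal_log hr, add_mul,
    Complex.exp_add, ← cpow_def_of_ne_zero hr', ← cpow_def_of_ne_zero hz]

theorem neg_I_mul_ofReal_cpow_one_half {r : ℝ} (hr : 0 ≤ r) :
    (-I * (r : ℂ)) ^ (1 / 2 : ℂ) = Real.sqrt r * cexp (-(Real.pi * I / 4)) := by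
  rw [mul_comm, ofReal_mul_cpow hr, cpow_def_of_ne_zero (neg_ne_zero.mpr I_ne_zero), log_neg_I,
    Real.sqrt_eq_rpow, ofReal_cpow hr]
  push_cast
  ring_nf

end SquareRoots

section Cusps

theorem cpow_one_half_mul_jacobiTheta₂_intCast_div_add (N : ℕ) [NeZero N] {c : ℤ}
    (hc : Even (c * N)) {τ : ℂ} (hτ : 0 < τ.im) :
    (-I * τ) ^ (1 / 2 : ℂ) * jacobiTheta₂ 0 (c / N + τ) =
      (∑ r ∈ range N, cexp (Real.pi * I * c * (r : ℂ) ^ 2 / N) *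
        jacobiTheta₂ (r / N) (-1 / (N ^ 2 * τ))) / N := by
  have hN_pos : 0 < N := NeZero.pos N
  have hN : (N : ℂ) ≠ 0 := NeZero.ne _
  have hτ0 : τ ≠ 0 := by rintro rfl; simp at hτ
  have root_scale : (-I * (N ^ 2 * τ)) ^ (1 / 2 : ℂ) = N * (-I * τ) ^ (1 / 2 : ℂ) := by
    have := ofReal_mul_cpow (r := (N : ℝ) ^ 2) (by positivity) (-I * τ) (1 / 2)
    push_cast at this
    rw [mul_left_comm, this, one_div, sq_cpow_two_inv (by simpa using hN_pos)]
  have residue_term (r : ℕ) : jacobiTheta₂_term r 0 τ * jacobiTheta₂ (N * (0 + r * τ)) (N ^ 2 * τ) =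
      (N * (-I * τ) ^ (1 / 2 : ℂ))⁻¹ * jacobiTheta₂ (r / N) (-1 / (N ^ 2 * τ)) := by
    rw [← root_scale, ← exp_mul_jacobiTheta₂_mul_self _ (by positivity), jacobiTheta₂_term]
    push_cast
    congr 2 <;> field_simp <;> ring
  simp only [jacobiTheta₂_intCast_div_add N hc 0 hτ, mul_assoc _ (jacobiTheta₂_term _ _ _),
    residue_term, mul_sum, sum_div]
  refine sum_congr rfl fun r _ ↦ ?_
  field_simp

theorem tendsto_cpow_one_half_mul_jacobiTheta₂_cusp (N : ℕ) [NeZero N] {c : ℤ}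
    (hc : Even (c * N)) {α : Type*} {l : Filter α} {τ : α → ℂ}
    (hτ : Tendsto (fun t ↦ (-1 / τ t).im) l atTop) :
    Tendsto (fun t ↦ (-I * τ t) ^ (1 / 2 : ℂ) * jacobiTheta₂ 0 (c / N + τ t)) l
      (𝓝 (quadGaussSum c N / N)) := by
  have hN_pos : 0 < N := NeZero.pos N
  have scaled : Tendsto (fun t ↦ -1 / (N ^ 2 * τ t)) l (comap im atTop) := by
    have im_eq (t : α) : (-1 / (N ^ 2 * τ t)).im = ((N : ℝ) ^ 2)⁻¹ * (-1 / τ t).im := by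
      rw [← im_ofReal_mul]
      push_cast
      congr 1
      ring
    rw [tendsto_comap_iff]
    exact (hτ.const_mul_atTop (by positivity)).congr fun t ↦ (im_eq t).symm
  have sum_tendsto := (tendsto_finsetSum (range N) fun r _ ↦
    ((tendsto_jacobiTheta₂_comap_im_atTop (r / N)).comp scaled).const_mul
      (cexp (Real.pi * I * c * (r : ℂ) ^ 2 / N))).div_const (N : ℂ)
  simp only [mul_one] at sum_tendsto
  refine sum_tendsto.congr' ?_
  filter_upwards [hτ.eventually_gt_atTop 0] with t ht
  have im_pos : 0 < (τ t).im := by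
    rw [neg_div, one_div, neg_im, inv_im, neg_div, neg_neg] at ht
    exact pos_of_mul_pos_left ht (inv_nonneg.mpr (normSq_nonneg _))
  exact (cpow_one_half_mul_jacobiTheta₂_intCast_div_add N hc im_pos).symm

-- `α⁻¹ - (α + τ)⁻¹` is the displacement of `-1 / (α + τ)` from the cusp `-1 / α`.
theorem neg_one_div_inv_sub_inv_add {α τ : ℂ} (hα : α ≠ 0) (hτ : τ ≠ 0) (hατ : α + τ ≠ 0) :
    -1 / (α⁻¹ - (α + τ)⁻¹) = α ^ 2 * (-1 / τ) - α := by
  have displacement : α⁻¹ - (α + τ)⁻¹ = τ / (α * (α + τ)) := by field_simp; ring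
  rw [displacement]
  field_simp
  ring

theorem ofReal_add_I_mul_ofReal_ne_zero {α : ℝ} (hα : α ≠ 0) (t : ℝ) : (α : ℂ) + I * t ≠ 0 :=
  fun h ↦ hα (by simpa using congrArg re h)

theorem im_neg_one_div_I_mul_ofReal (t : ℝ) : (-1 / (I * t)).im = t⁻¹ := by
  rw [div_mul_eq_div_div, neg_div, one_div, inv_I, neg_neg, div_ofReal_im, I_im, one_div]

theorem tendsto_im_neg_one_div_inv_sub_inv_add {α : ℝ} (hα : α ≠ 0) :
    Tendsto (fun t : ℝ ↦ (-1 / ((α : ℂ)⁻¹ - (α + I * t)⁻¹)).im) (𝓝[>] 0) atTop := by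
  refine (tendsto_inv_nhdsGT_zero.const_mul_atTop (sq_pos_of_ne_zero hα)).congr' ?_
  filter_upwards [self_mem_nhdsWithin] with t (ht : 0 < t)
  have ht' : (t : ℂ) ≠ 0 := ofReal_ne_zero.mpr ht.ne'
  rw [neg_one_div_inv_sub_inv_add (ofReal_ne_zero.mpr hα) (mul_ne_zero I_ne_zero ht')
    (ofReal_add_I_mul_ofReal_ne_zero hα t), sub_im, ofReal_im, ← ofReal_pow,
    im_ofReal_mul, im_neg_one_div_I_mul_ofReal, sub_zero]

theorem cpow_one_half_mul_jacobiTheta₂_neg_inv_add {α t : ℝ} (hα : α ≠ 0) (ht : 0 ≤ t) :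
    (-I * ((α : ℂ)⁻¹ - (α + I * t)⁻¹)) ^ (1 / 2 : ℂ) *
        jacobiTheta₂ 0 (-(α : ℂ)⁻¹ + ((α : ℂ)⁻¹ - (α + I * t)⁻¹)) =
      ((α * (α + I * t) : ℂ)⁻¹ ^ (1 / 2 : ℂ) * (-I * (α + I * t)) ^ (1 / 2 : ℂ)) *
        ((-I * (I * t)) ^ (1 / 2 : ℂ) * jacobiTheta₂ 0 (α + I * t)) := by
  have hα' : (α : ℂ) ≠ 0 := ofReal_ne_zero.mpr hα
  have hατ := ofReal_add_I_mul_ofReal_ne_zero hα t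
  have neg_I_mul_I : -I * (I * t) = t := by rw [← mul_assoc, neg_mul, I_mul_I, neg_neg, one_mul]
  have displacement :
      -I * ((α : ℂ)⁻¹ - (α + I * t)⁻¹) = t * (α * (α + I * t) : ℂ)⁻¹ := by
    field_simp
    linear_combination (-(t : ℂ)) * I_sq
  have functional_equation : jacobiTheta₂ 0 (α + I * t) =
      ((-I * (α + I * t)) ^ (1 / 2 : ℂ))⁻¹ * jacobiTheta₂ 0 (-(α + I * t : ℂ)⁻¹) := by
    simpa [neg_div] using jacobiTheta₂_functional_equation 0 (α + I * t)
  rw [neg_add_eq_sub, sub_sub_cancel_left, displacement, neg_I_mul_I, functional_equation,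
    ofReal_mul_cpow ht]
  field_simp

theorem tendsto_inv_cpow_one_half_mul_neg_I_mul_cpow_one_half {α : ℝ} (hα : 0 < α) :
    Tendsto (fun t : ℝ ↦
        (α * (α + I * t) : ℂ)⁻¹ ^ (1 / 2 : ℂ) * (-I * (α + I * t)) ^ (1 / 2 : ℂ))
      (𝓝[>] 0) (𝓝 ((Real.sqrt α : ℂ)⁻¹ * cexp (-(Real.pi * I / 4)))) := by
  have hα' : (α : ℂ) ≠ 0 := ofReal_ne_zero.mpr hα.ne'
  have base : Tendsto (fun t : ℝ ↦ (α : ℂ) + I * t) (𝓝[>] 0) (𝓝 α) := by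
    have : Continuous fun t : ℝ ↦ (α : ℂ) + I * t := by fun_prop
    simpa using this.continuousWithinAt (x := 0).tendsto
  have limit_eq : (α * α : ℂ)⁻¹ ^ (1 / 2 : ℂ) * (-I * α) ^ (1 / 2 : ℂ) =
      (Real.sqrt α : ℂ)⁻¹ * cexp (-(Real.pi * I / 4)) := by
    have sqrt_sq : (Real.sqrt α : ℂ) * Real.sqrt α = α := mod_cast Real.mul_self_sqrt hα.le
    have sqrt_ne_zero : (Real.sqrt α : ℂ) ≠ 0 := ofReal_ne_zero.mpr (Real.sqrt_ne_zero'.mpr hα)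
    rw [neg_I_mul_ofReal_cpow_one_half hα.le, ← sq, ← inv_pow, ← ofReal_inv, one_div,
      sq_cpow_two_inv (inv_pos.mpr hα), ofReal_inv, ← sqrt_sq]
    field_simp
  rw [← limit_eq]
  refine .mul (.cpow ?_ tendsto_const_nhds (.inl ?_)) (.cpow ?_ tendsto_const_nhds (.inr ?_))
  · exact (base.const_mul _).inv₀ (mul_ne_zero hα' hα')
  · rw [← ofReal_mul, ← ofReal_inv, ofReal_re]
    positivity
  · exact base.const_mul _
  · simp [hα.ne']

theorem quadGaussSum_neg_div (a b : ℕ) [NeZero a] [NeZero b] (hab : Even (a * b)) :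
    quadGaussSum (-b) a / a =
      (Real.sqrt (a / b) : ℂ)⁻¹ * cexp (-(Real.pi * I / 4)) * (quadGaussSum a b / b) := by
  have ha : 0 < a := NeZero.pos a
  have hb : 0 < b := NeZero.pos b
  have hα : (0 : ℝ) < a / b := by positivity
  have even_left : Even ((a : ℤ) * b) := mod_cast hab
  have even_right : Even (-(b : ℤ) * a) := by rwa [neg_mul, even_neg, mul_comm]
  have at_left := tendsto_cpow_one_half_mul_jacobiTheta₂_cusp b even_left
    (tendsto_inv_nhdsGT_zero.congr fun t ↦ (im_neg_one_div_I_mul_ofReal t).symm)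
  have at_right := tendsto_cpow_one_half_mul_jacobiTheta₂_cusp a even_right
    (tendsto_im_neg_one_div_inv_sub_inv_add hα.ne')
  refine tendsto_nhds_unique_of_eventuallyEq at_right
    ((tendsto_inv_cpow_one_half_mul_neg_I_mul_cpow_one_half hα).mul at_left) ?_
  filter_upwards [self_mem_nhdsWithin] with t (ht : 0 < t)
  simpa [neg_div] using cpow_one_half_mul_jacobiTheta₂_neg_inv_add hα.ne' ht.le

end Cusps

/-- The Landsberg–Schaar reciprocity law; the lens space `L_p` at level `k` is `a = 2k`, `b = p`. -/
theorem rt_invariant_lens_space_general (a b : ℕ) [NeZero a] [NeZero b] (hab : Even (a * b)) :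
    (Real.sqrt a : ℂ)⁻¹ * cexp (Real.pi * I / 4) * quadGaussSum (-b) a =
      (Real.sqrt b : ℂ)⁻¹ * quadGaussSum a b := by
  have sq_sqrt_natCast (n : ℕ) : (Real.sqrt n : ℂ) ^ 2 = n :=
    mod_cast Real.sq_sqrt n.cast_nonneg
  have sqrt_natCast_ne_zero (n : ℕ) [NeZero n] : (Real.sqrt n : ℂ) ≠ 0 := by simp [NeZero.ne n]
  have ha := sqrt_natCast_ne_zero a
  have hb := sqrt_natCast_ne_zero b
  have cusp_limits := quadGaussSum_neg_div a b hab
  rw [Real.sqrt_div a.cast_nonneg, ofReal_div, Complex.exp_neg, ← sq_sqrt_natCast a,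
    ← sq_sqrt_natCast b] at cusp_limits
  field_simp at cusp_limits ⊢
  exact cusp_limits

/-- The `U(1)` Reshetikhin–Turaev invariant of the lens space `L_p`, presented by the
unknot with surgery coefficient `p`, equals `(1/√p) Σ_{n=0}^{p-1} e^{2πik n²/p}`:
`(2k)^{-1/2} e^{iπ/4} Σ_{q=0}^{2k-1} exp(-2πi p q²/(4k)) = p^{-1/2} Σ_{n=0}^{p-1} exp(2πi k n²/p)`. -/
theorem rt_invariant_lens_space (k p : ℕ) (hk : 1 ≤ k) (hp : 1 ≤ p) :
    (Real.sqrt (2 * k) : ℂ)⁻¹ * Complex.exp (Real.pi * Complex.I / 4) *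
      (∑ q ∈ Finset.range (2 * k),
        Complex.exp (-(2 * Real.pi * Complex.I * (p : ℂ) * (q : ℂ) ^ 2 / (4 * (k : ℂ))))) =
    (Real.sqrt p : ℂ)⁻¹ *
      (∑ n ∈ Finset.range p,
        Complex.exp (2 * Real.pi * Complex.I * (k : ℂ) * (n : ℂ) ^ 2 / (p : ℂ))) := by
  have : NeZero k := ⟨by omega⟩
  have : NeZero p := ⟨by omega⟩
  have reciprocity := rt_invariant_lens_space_general (2 * k) p (by simp)
  simp only [quadGaussSum] at reciprocity
  push_cast at reciprocity
  convert reciprocity using 4 <;> ring_nf
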